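/- For every differential ring K, there exist a differential K-algebra K* and a K-Taylor morphism T^K for K* such that T^K admits an evaluation map ev_K : K* → K. -/

import Mathlib

/-!
The differential algebra `K*` is the cofree differential ring on the underlying ring of `K`, that
is, the ring of Hurwitz series in `m` variables over `K`. The Taylor morphism sends `φ : A → K` to
`a ↦ (∂ ↦ φ (∂ a))`, where `∂` runs through the compositions of the derivations, the structure map
of `K*` is the Taylor morphism of `id_K`, and evaluation takes the constant coefficient. With these
choices (TM1), (TM2), (EV1) and (EV2) hold because a differential homomorphism commutes with each
`∂`. Working with Hurwitz series instead of power series avoids dividing by factorials, so `K` need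
not contain `ℚ`.

To avoid multinomial coefficients, series are indexed by words in the derivations: an element is a
function `List (Fin m) → K`, the `i`-th derivation is `f ↦ f (i :: ·)`, and the product is the one
forced by the Leibniz rule (`WordSeries.mulFun`). All identities then follow by induction on words.
The derivations commute on the subring of functions invariant under permutation of the word
(`WordSeries.symm`), and this subring is `K*`.
-/

universe u

/-- A family of `m` pairwise commuting derivations on a commutative ring,
making it a differential ring. -/
structure DiffStruct (m : ℕ) (A : Type u) [CommRing A] : Type u where
  d : Fin m → A → A
  d_add : ∀ (i : Fin m) (x y : A), d i (x + y) = d i x + d i y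
  d_mul : ∀ (i : Fin m) (x y : A), d i (x * y) = d i x * y + x * d i y
  d_comm : ∀ (i j : Fin m) (x : A), d i (d j x) = d j (d i x)

/-- A ring homomorphism is differential if it commutes with the derivations. -/
def IsDiffHom {m : ℕ} {A B : Type u} [CommRing A] [CommRing B]
    (dA : DiffStruct m A) (dB : DiffStruct m B) (φ : A →+* B) : Prop :=
  ∀ (i : Fin m) (x : A), φ (dA.d i x) = dB.d i (φ x)

/-- A `K`-Taylor morphism for a differential `K`-algebra `(L, dL, ηL)`:
an assignment sending each differential ring `A` with a ring homomorphism
`φ : A → K` to a differential ring homomorphism `T_φ : A → L`, satisfying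
(TM1) and (TM2). -/
structure TaylorMorphism (m : ℕ) (K : Type u) [CommRing K] (dK : DiffStruct m K)
    (L : Type u) [CommRing L] (dL : DiffStruct m L) (ηL : K →+* L) :
    Type (u + 1) where
  T : ∀ (A : Type u) [CommRing A], DiffStruct m A → (A →+* K) → (A →+* L)
  T_diff : ∀ (A : Type u) [CommRing A] (dA : DiffStruct m A) (φ : A →+* K),
    IsDiffHom dA dL (T A dA φ)
  tm1 : ∀ (A : Type u) [CommRing A] (dA : DiffStruct m A) (φ : A →+* K),
    IsDiffHom dA dK φ → T A dA φ = ηL.comp φ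
  tm2 : ∀ (A B : Type u) [CommRing A] [CommRing B]
    (dA : DiffStruct m A) (dB : DiffStruct m B)
    (φ : A →+* K) (ψ : B →+* K) (χ : A →+* B),
    IsDiffHom dA dB χ → φ = ψ.comp χ → T A dA φ = (T B dB ψ).comp χ

/-- An evaluation map for a `K`-Taylor morphism `T` for `L`: a `K`-algebra
homomorphism `ev : L → K` satisfying (EV1) `ev ∘ T_φ = φ` for all `(A, φ)` and
(EV2) `T_ev = id_L`. -/
def IsEvalMap {m : ℕ} {K L : Type u} [CommRing K] [CommRing L]
    {dK : DiffStruct m K} {dL : DiffStruct m L} {ηL : K →+* L}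
    (T : TaylorMorphism m K dK L dL ηL) (ev : L →+* K) : Prop :=
  ev.comp ηL = RingHom.id K ∧
  (∀ (A : Type u) [CommRing A] (dA : DiffStruct m A) (φ : A →+* K),
    ev.comp (T.T A dA φ) = φ) ∧
  T.T L dL ev = RingHom.id L

/-- Series over `K` indexed by words in the `m` letters `Fin m`; the coefficient at `w` stands for
the constant term of the derivative along `w`, the head of `w` being applied first. -/
def WordSeries (m : ℕ) (K : Type u) : Type u := List (Fin m) → K

namespace WordSeries

variable {m : ℕ} {K : Type u}

@[ext] theorem ext {f g : WordSeries m K} (h : ∀ w, f w = g w) : f = g := funext h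

/-- The derivation attached to the letter `i`. -/
def shift (i : Fin m) (f : WordSeries m K) : WordSeries m K := fun w => f (i :: w)

/-- Coefficients do not depend on the order of the letters. -/
def IsSymm (f : WordSeries m K) : Prop := ∀ w w' : List (Fin m), w.Perm w' → f w = f w'

theorem IsSymm.shift {f : WordSeries m K} (hf : IsSymm f) (i : Fin m) : IsSymm (shift i f) :=
  fun _ _ h => hf _ _ (h.cons i)

theorem IsSymm.shift_comm {f : WordSeries m K} (hf : IsSymm f) (i j : Fin m) :
    WordSeries.shift i (WordSeries.shift j f) = WordSeries.shift j (WordSeries.shift i f) :=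
  ext fun w => hf _ _ (List.Perm.swap i j w)

variable [CommRing K]

instance : AddCommGroup (WordSeries m K) := inferInstanceAs (AddCommGroup (List (Fin m) → K))

theorem zero_coeff (w : List (Fin m)) : (0 : WordSeries m K) w = 0 := rfl
theorem add_coeff (f g : WordSeries m K) (w : List (Fin m)) : (f + g) w = f w + g w := rfl
theorem neg_coeff (f : WordSeries m K) (w : List (Fin m)) : (-f) w = -f w := rfl

theorem shift_add (i : Fin m) (f g : WordSeries m K) : shift i (f + g) = shift i f + shift i g :=
  rfl

/-- The product determined by multiplicativity of the coefficient at the empty word and the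
Leibniz rule for `shift`. -/
def mulFun : WordSeries m K → WordSeries m K → List (Fin m) → K
  | f, g, [] => f [] * g []
  | f, g, i :: w => mulFun (shift i f) g w + mulFun f (shift i g) w

instance : Mul (WordSeries m K) := ⟨fun f g => mulFun f g⟩

instance : One (WordSeries m K) := ⟨fun w => match w with | [] => 1 | _ :: _ => 0⟩

theorem mul_nil (f g : WordSeries m K) : (f * g) [] = f [] * g [] := rfl

theorem mul_cons (f g : WordSeries m K) (i : Fin m) (w : List (Fin m)) :
    (f * g) (i :: w) = (shift i f * g) w + (f * shift i g) w := rfl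

theorem shift_mul (i : Fin m) (f g : WordSeries m K) :
    shift i (f * g) = shift i f * g + f * shift i g := rfl

theorem one_nil : (1 : WordSeries m K) [] = 1 := rfl
theorem one_cons (i : Fin m) (w : List (Fin m)) : (1 : WordSeries m K) (i :: w) = 0 := rfl
theorem shift_one (i : Fin m) : shift i (1 : WordSeries m K) = 0 := rfl
theorem shift_zero (i : Fin m) : shift i (0 : WordSeries m K) = 0 := rfl

theorem mul_comm_aux (w : List (Fin m)) :
    ∀ f g : WordSeries m K, (f * g) w = (g * f) w := by
  induction w with
  | nil => intro f g; simp only [mul_nil, mul_comm]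
  | cons i w ih => intro f g; rw [mul_cons, mul_cons, ih, ih f, add_comm]

theorem add_mul_aux (w : List (Fin m)) :
    ∀ f g h : WordSeries m K, ((f + g) * h) w = (f * h) w + (g * h) w := by
  induction w with
  | nil => intro f g h; simp only [mul_nil, add_coeff, add_mul]
  | cons i w ih => intro f g h; simp only [mul_cons, shift_add, ih]; abel

theorem mul_add_aux (w : List (Fin m)) (f g h : WordSeries m K) :
    (f * (g + h)) w = (f * g) w + (f * h) w := by
  rw [mul_comm_aux, add_mul_aux, mul_comm_aux w g, mul_comm_aux w h]

theorem mul_assoc_aux (w : List (Fin m)) :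
    ∀ f g h : WordSeries m K, (f * g * h) w = (f * (g * h)) w := by
  induction w with
  | nil => intro f g h; simp only [mul_nil, mul_assoc]
  | cons i w ih =>
    intro f g h
    simp only [mul_cons, shift_mul, add_mul_aux, mul_add_aux, ih, add_assoc]

theorem zero_mul_aux (w : List (Fin m)) :
    ∀ f : WordSeries m K, ((0 : WordSeries m K) * f) w = 0 := by
  induction w with
  | nil => intro f; simp only [mul_nil, zero_coeff, zero_mul]
  | cons i w ih => intro f; simp only [mul_cons, shift_zero, ih, add_zero]

theorem one_mul_aux (w : List (Fin m)) :
    ∀ f : WordSeries m K, ((1 : WordSeries m K) * f) w = f w := by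
  induction w with
  | nil => intro f; simp only [mul_nil, one_nil, one_mul]
  | cons i w ih => intro f; simp only [mul_cons, shift_one, zero_mul_aux, ih, zero_add, shift]

instance : CommRing (WordSeries m K) where
  __ := (inferInstance : AddCommGroup (WordSeries m K))
  mul := (· * ·)
  one := 1
  mul_assoc f g h := ext fun w => mul_assoc_aux w f g h
  mul_comm f g := ext fun w => mul_comm_aux w f g
  one_mul f := ext fun w => one_mul_aux w f
  mul_one f := ext fun w => (mul_comm_aux w f 1).trans (one_mul_aux w f)
  zero_mul f := ext fun w => zero_mul_aux w f
  mul_zero f := ext fun w => (mul_comm_aux w f 0).trans (zero_mul_aux w f)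
  left_distrib f g h := ext fun w => mul_add_aux w f g h
  right_distrib f g h := ext fun w => add_mul_aux w f g h

theorem IsSymm.mul {f g : WordSeries m K} (hf : IsSymm f) (hg : IsSymm g) : IsSymm (f * g) := by
  intro w w' h
  induction h generalizing f g with
  | nil => rfl
  | cons i _ ih => rw [mul_cons, mul_cons, ih (hf.shift i) hg, ih hf (hg.shift i)]
  | swap i j w =>
    simp only [mul_cons, hf.shift_comm i j, hg.shift_comm i j]
    abel
  | trans _ _ ih₁ ih₂ => exact (ih₁ hf hg).trans (ih₂ hf hg)

theorem isSymm_one : IsSymm (1 : WordSeries m K) := by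
  intro w w' h
  cases w with
  | nil => rw [h.nil_eq]
  | cons i w =>
    cases w' with
    | nil => exact absurd h.symm.nil_eq (by simp)
    | cons j v => rfl

/-- The subring of permutation-invariant series. Such a series is determined by its coefficients
at the multi-indices in `ℕ^m`, so this is the ring of Hurwitz series. -/
def symm (m : ℕ) (K : Type u) [CommRing K] : Subring (WordSeries m K) where
  carrier := {f | IsSymm f}
  mul_mem' hf hg := IsSymm.mul hf hg
  one_mem' := isSymm_one
  add_mem' hf hg w v h := by rw [add_coeff, add_coeff, hf w v h, hg w v h]
  zero_mem' _ _ _ := rfl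
  neg_mem' hf w v h := by rw [neg_coeff, neg_coeff, hf w v h]

/-- The differential structure on the symmetric series given by the shifts. -/
def symmDiff (m : ℕ) (K : Type u) [CommRing K] : DiffStruct m (symm m K) where
  d i f := ⟨shift i f.1, IsSymm.shift f.2 i⟩
  d_add _ _ _ := rfl
  d_mul _ _ _ := rfl
  d_comm i j f := Subtype.ext (IsSymm.shift_comm f.2 i j)

/-- Evaluation: the coefficient at the empty word. -/
def ev (m : ℕ) (K : Type u) [CommRing K] : symm m K →+* K where
  toFun f := f.1 []
  map_one' := rfl
  map_mul' _ _ := rfl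
  map_zero' := rfl
  map_add' _ _ := rfl

end WordSeries

namespace DiffStruct

variable {m : ℕ} {A : Type u} [CommRing A]

theorem d_zero (dA : DiffStruct m A) (i : Fin m) : dA.d i 0 = 0 := by
  simpa using dA.d_add i 0 0

theorem d_one (dA : DiffStruct m A) (i : Fin m) : dA.d i 1 = 0 := by
  simpa using dA.d_mul i 1 1

/-- The iterated derivative along a word, whose head is applied first. -/
def iter (dA : DiffStruct m A) : List (Fin m) → A → A
  | [], a => a
  | i :: w, a => iter dA w (dA.d i a)

theorem iter_zero (dA : DiffStruct m A) (w : List (Fin m)) : dA.iter w 0 = 0 := by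
  induction w with
  | nil => rfl
  | cons i w ih => rw [iter, d_zero, ih]

theorem iter_add (dA : DiffStruct m A) (w : List (Fin m)) :
    ∀ a b : A, dA.iter w (a + b) = dA.iter w a + dA.iter w b := by
  induction w with
  | nil => intro a b; rfl
  | cons i w ih => intro a b; simp only [iter, d_add, ih]

theorem iter_perm (dA : DiffStruct m A) {w w' : List (Fin m)} (h : w.Perm w') (a : A) :
    dA.iter w a = dA.iter w' a := by
  induction h generalizing a with
  | nil => rfl
  | cons i _ ih => exact ih _
  | swap i j w => simp only [iter, dA.d_comm i j]
  | trans _ _ ih₁ ih₂ => exact (ih₁ a).trans (ih₂ a)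

theorem map_iter {B : Type u} [CommRing B] {dA : DiffStruct m A} {dB : DiffStruct m B}
    {χ : A →+* B} (hχ : IsDiffHom dA dB χ) (w : List (Fin m)) :
    ∀ a : A, χ (dA.iter w a) = dB.iter w (χ a) := by
  induction w with
  | nil => intro a; rfl
  | cons i w ih => intro a; rw [iter, iter, ih, hχ]

variable {K : Type u} [CommRing K]

/-- The Taylor series of `a` along `φ`: its coefficient at `w` is `φ` of the derivative of `a`
along `w`. -/
def taylorFun (dA : DiffStruct m A) (φ : A →+* K) (a : A) : WordSeries m K :=
  fun w => φ (dA.iter w a)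

theorem shift_taylorFun (dA : DiffStruct m A) (φ : A →+* K) (i : Fin m) (a : A) :
    WordSeries.shift i (dA.taylorFun φ a) = dA.taylorFun φ (dA.d i a) := rfl

theorem taylorFun_add (dA : DiffStruct m A) (φ : A →+* K) (a b : A) :
    dA.taylorFun φ (a + b) = dA.taylorFun φ a + dA.taylorFun φ b :=
  WordSeries.ext fun w => by
    simp only [WordSeries.add_coeff, taylorFun, iter_add, map_add]

theorem taylorFun_mul (dA : DiffStruct m A) (φ : A →+* K) (a b : A) :
    dA.taylorFun φ (a * b) = dA.taylorFun φ a * dA.taylorFun φ b := by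
  ext w
  induction w generalizing a b with
  | nil => exact map_mul φ a b
  | cons i w ih =>
    rw [WordSeries.mul_cons, shift_taylorFun, shift_taylorFun, ← ih, ← ih,
      ← WordSeries.add_coeff, ← taylorFun_add, ← dA.d_mul]
    rfl

theorem taylorFun_one (dA : DiffStruct m A) (φ : A →+* K) : dA.taylorFun φ 1 = 1 := by
  ext w
  cases w with
  | nil => exact map_one φ
  | cons i w => rw [WordSeries.one_cons, taylorFun, iter, d_one, iter_zero, map_zero]

/-- The Taylor morphism of `φ : A → K`; it is the differential homomorphism into the cofree
differential ring corresponding to the ring homomorphism `φ`. -/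
def taylor (dA : DiffStruct m A) (φ : A →+* K) : A →+* WordSeries.symm m K where
  toFun a := ⟨dA.taylorFun φ a, fun _ _ h => congrArg φ (dA.iter_perm h a)⟩
  map_one' := Subtype.ext (dA.taylorFun_one φ)
  map_mul' a b := Subtype.ext (dA.taylorFun_mul φ a b)
  map_zero' := Subtype.ext <| WordSeries.ext fun w => by
    change φ (dA.iter w 0) = 0
    rw [iter_zero, map_zero]
  map_add' a b := Subtype.ext (dA.taylorFun_add φ a b)

theorem taylor_coeff (dA : DiffStruct m A) (φ : A →+* K) (a : A) (w : List (Fin m)) :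
    (dA.taylor φ a).1 w = φ (dA.iter w a) := rfl

theorem taylor_isDiffHom (dA : DiffStruct m A) (φ : A →+* K) :
    IsDiffHom dA (WordSeries.symmDiff m K) (dA.taylor φ) := fun _ _ => rfl

theorem taylor_comp {B : Type u} [CommRing B] {dA : DiffStruct m A} {dB : DiffStruct m B}
    (ψ : B →+* K) {χ : A →+* B} (hχ : IsDiffHom dA dB χ) :
    dA.taylor (ψ.comp χ) = (dB.taylor ψ).comp χ :=
  RingHom.ext fun a => Subtype.ext <| WordSeries.ext fun w => congrArg ψ (map_iter hχ w a)

/-- Every symmetric series is its own Taylor series along evaluation. -/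
theorem taylor_ev : (WordSeries.symmDiff m K).taylor (WordSeries.ev m K) = RingHom.id _ := by
  refine RingHom.ext fun f => Subtype.ext <| WordSeries.ext fun w => ?_
  rw [taylor_coeff]
  induction w generalizing f with
  | nil => rfl
  | cons i w ih => exact ih _

end DiffStruct

/-- the universal Taylor morphism admits an evaluation map.
For every differential ring `K` there are a differential `K`-algebra `K*` and a
`K`-Taylor morphism `T^K` for `K*` admitting an evaluation map `ev_K : K* → K`. -/
theorem exists_taylor_morphism_with_eval_map
    {m : ℕ} (K : Type u) [CommRing K] (dK : DiffStruct m K) :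
    ∃ (Kstar : Type u) (_ : CommRing Kstar) (dKs : DiffStruct m Kstar)
      (ηKs : K →+* Kstar) (_ : IsDiffHom dK dKs ηKs)
      (TK : TaylorMorphism m K dK Kstar dKs ηKs) (evK : Kstar →+* K),
      IsEvalMap TK evK := by
  let TK : TaylorMorphism m K dK (WordSeries.symm m K) (WordSeries.symmDiff m K)
      (dK.taylor (RingHom.id K)) :=
    { T := fun A _ dA φ => dA.taylor φ
      T_diff := fun A _ dA φ => dA.taylor_isDiffHom φ
      -- (TM1) is the instance `ψ = id`, `χ = φ` of (TM2).
      tm1 := fun A _ dA φ hφ => DiffStruct.taylor_comp (RingHom.id K) hφ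
      tm2 := fun A B _ _ dA dB φ ψ χ hχ h => h ▸ DiffStruct.taylor_comp ψ hχ }
  exact ⟨WordSeries.symm m K, inferInstance, WordSeries.symmDiff m K, dK.taylor (RingHom.id K),
    dK.taylor_isDiffHom _, TK, WordSeries.ev m K, rfl, fun _ _ _ _ => rfl, DiffStruct.taylor_ev⟩
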